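/- (Origami trisection fold) Let h > 0 and σ ∈ (0, π/6). In ℝ², put B = (0,0), E = (0, 2h), B′ = (h·cos σ/sin σ, h), and E′ = ((h/sin σ)·cos 3σ, (h/sin σ)·sin 3σ). Then B ≠ B′, E ≠ E′, and the perpendicular bisector of B and B′ equals the perpendicular bisector of E and E′; that is, a single fold maps B onto the point B′ of the horizontal line {p₂ = h} and simultaneously maps E onto the point E′ of the ray from the origin with direction angle 3σ. Since B′ lies on the ray from B with direction angle σ, this fold trisects the angle α = 3σ. -/

import Mathlib

noncomputable section
open Real EuclideanGeometry

/-- Points of the Euclidean plane `ℝ²`. -/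
abbrev Pt : Type := EuclideanSpace ℝ (Fin 2)

/-- The point of `ℝ²` with coordinates `(x, y)`. -/
def pt (x y : ℝ) : Pt := !₂[x, y]

/-- The perpendicular bisector of two points `U`, `V` of the plane: the crease
obtained by folding `U` onto `V`. -/
def perpBisector (U V : Pt) : Set Pt := {P | dist P U = dist P V}

/-!
Put `r = h / sin σ`, so that `B' = r (cos σ, sin σ)` and `E' = r (cos 3σ, sin 3σ)`. Then `E' - E` is
`2 cos 2σ - 1` times `B' - B`, and `BE = 2 h = B'E'`, the latter being the chord that subtends the
angle `2σ` in a circle of radius `r`. Thus `BB'` and `EE'` are the parallel sides of an isosceles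
trapezoid with legs `BE` and `B'E'`, possibly a self-crossing one; the factor `2 cos 2σ - 1` is not
`1`, which rules out a parallelogram. The parallel sides of an isosceles trapezoid have the same
perpendicular bisector.
-/

section IsoscelesTrapezoid

open scoped RealInnerProductSpace

variable {V P : Type*} [NormedAddCommGroup V] [InnerProductSpace ℝ V] [MetricSpace P]
  [NormedAddTorsor V P] {p₁ p₂ q₁ q₂ x : P} {c : ℝ}

theorem affinePerpBisector_eq_of_vsub_eq_smul_of_mem (hc : c ≠ 0)
    (hq : q₂ -ᵥ q₁ = c • (p₂ -ᵥ p₁)) (hxp : x ∈ AffineSubspace.perpBisector p₁ p₂)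
    (hxq : x ∈ AffineSubspace.perpBisector q₁ q₂) :
    AffineSubspace.perpBisector p₁ p₂ = AffineSubspace.perpBisector q₁ q₂ := by
  refine AffineSubspace.ext_of_direction_eq ?_ ⟨x, hxp, hxq⟩
  rw [AffineSubspace.direction_perpBisector, AffineSubspace.direction_perpBisector, hq,
    Submodule.span_singleton_smul_eq (IsUnit.mk0 c hc)]

theorem midpoint_mem_affinePerpBisector_of_vsub_eq_smul_of_dist_eq (hc : c ≠ 1)
    (hq : q₂ -ᵥ q₁ = c • (p₂ -ᵥ p₁)) (hd : dist p₁ q₁ = dist p₂ q₂) :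
    midpoint ℝ q₁ q₂ ∈ AffineSubspace.perpBisector p₁ p₂ := by
  set b := p₂ -ᵥ p₁
  set v := q₁ -ᵥ p₁
  have hleg : q₂ -ᵥ p₂ = v + (c - 1) • b := by
    rw [← vsub_add_vsub_cancel q₂ q₁ p₂, hq, ← vsub_sub_vsub_cancel_right q₁ p₂ p₁]
    module
  have hmid : midpoint ℝ q₁ q₂ -ᵥ midpoint ℝ p₁ p₂ = v + ((c - 1) / 2) • b := by
    rw [midpoint_vsub_midpoint, midpoint_eq_smul_add, hleg, invOf_eq_inv]
    module
  have hnorm : ‖v‖ ^ 2 = ‖v + (c - 1) • b‖ ^ 2 := by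
    rw [← hleg, ← dist_eq_norm_vsub V, ← dist_eq_norm_vsub V, dist_comm, hd, dist_comm]
  have hinner : (c - 1) * ⟪v + ((c - 1) / 2) • b, b⟫ = 0 := by
    rw [norm_add_sq_real, norm_smul, mul_pow, Real.norm_eq_abs, sq_abs,
      real_inner_smul_right] at hnorm
    rw [inner_add_left, real_inner_smul_left, real_inner_self_eq_norm_sq]
    linarith
  rw [AffineSubspace.mem_perpBisector_iff_inner_eq_zero, hmid]
  exact (mul_eq_zero.mp hinner).resolve_left (sub_ne_zero.mpr hc)

theorem affinePerpBisector_eq_of_vsub_eq_smul_of_dist_eq (hc₀ : c ≠ 0) (hc₁ : c ≠ 1)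
    (hq : q₂ -ᵥ q₁ = c • (p₂ -ᵥ p₁)) (hd : dist p₁ q₁ = dist p₂ q₂) :
    AffineSubspace.perpBisector p₁ p₂ = AffineSubspace.perpBisector q₁ q₂ :=
  affinePerpBisector_eq_of_vsub_eq_smul_of_mem hc₀ hq
    (midpoint_mem_affinePerpBisector_of_vsub_eq_smul_of_dist_eq hc₁ hq hd)
    (AffineSubspace.midpoint_mem_perpBisector q₁ q₂)

end IsoscelesTrapezoid

theorem perpBisector_eq_coe (U V : Pt) : perpBisector U V = AffineSubspace.perpBisector U V :=
  Set.ext fun _ ↦ AffineSubspace.mem_perpBisector_iff_dist_eq.symm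

theorem dist_pt_pt (a b c d : ℝ) : dist (pt a b) (pt c d) = √((a - c) ^ 2 + (b - d) ^ 2) := by
  simp [EuclideanSpace.dist_eq, pt, Real.dist_eq, sq_abs]

/-- The point of the plane with polar coordinates `(r, θ)`; `r` may be negative. -/
def polarPt (r θ : ℝ) : Pt := pt (r * cos θ) (r * sin θ)

theorem dist_polarPt_polarPt (r α β : ℝ) :
    dist (polarPt r α) (polarPt r β) = 2 * |r * sin ((α - β) / 2)| := by
  have hsq : (r * cos α - r * cos β) ^ 2 + (r * sin α - r * sin β) ^ 2
      = (2 * (r * sin ((α - β) / 2))) ^ 2 := by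
    rw [← mul_sub, ← mul_sub, cos_sub_cos, sin_sub_sin]
    linear_combination
      4 * r ^ 2 * sin ((α - β) / 2) ^ 2 * sin_sq_add_cos_sq ((α + β) / 2)
  rw [polarPt, polarPt, dist_pt_pt, hsq, sqrt_sq_eq_abs, abs_mul, abs_two]

theorem polarPt_three_mul_sub (r σ : ℝ) :
    polarPt r (3 * σ) - pt 0 (2 * (r * sin σ)) = (2 * cos (2 * σ) - 1) • polarPt r σ := by
  ext i
  fin_cases i
  · simp only [polarPt, pt, cos_three_mul, cos_two_mul, Fin.zero_eta, PiLp.sub_apply,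
      PiLp.smul_apply, Matrix.cons_val_zero, smul_eq_mul]
    ring
  · simp only [polarPt, pt, sin_three_mul, cos_two_mul, cos_sq', Fin.mk_one, PiLp.sub_apply,
      PiLp.smul_apply, Matrix.cons_val_one, Matrix.cons_val_fin_one, smul_eq_mul]
    ring

theorem dist_pt_zero_eq_dist_polarPt (r σ : ℝ) :
    dist (pt 0 0) (pt 0 (2 * (r * sin σ))) = dist (polarPt r σ) (polarPt r (3 * σ)) := by
  have hhalf : (σ - 3 * σ) / 2 = -σ := by ring
  rw [dist_polarPt_polarPt, dist_pt_pt, hhalf, sin_neg, mul_neg, abs_neg, sub_self, zero_sub,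
    neg_sq, zero_pow two_ne_zero, zero_add, sqrt_sq_eq_abs, abs_mul, abs_two]

theorem two_mul_cos_two_mul_sub_one_ne_one {σ : ℝ} (hs : sin σ ≠ 0) : 2 * cos (2 * σ) - 1 ≠ 1 := by
  intro hc
  rw [cos_two_mul, cos_sq'] at hc
  exact hs (pow_eq_zero_iff two_ne_zero |>.mp (by linarith))

theorem one_lt_two_mul_cos_two_mul_of_abs_lt {σ : ℝ} (hσ : |σ| < π / 6) : 1 < 2 * cos (2 * σ) := by
  have hcos : cos (π / 3) < cos |2 * σ| :=
    cos_lt_cos_of_nonneg_of_le_pi (abs_nonneg _) (by linarith [pi_pos])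
      (by rw [abs_mul, abs_two]; linarith)
  rw [cos_abs, cos_pi_div_three] at hcos
  linarith

theorem origami_trisection_fold_general (h σ : ℝ) (hh : h ≠ 0) (hs : sin σ ≠ 0)
    (hσ : 2 * cos (2 * σ) ≠ 1)
    (B : Pt) (hB : B = pt 0 0) (E : Pt) (hE : E = pt 0 (2 * h))
    (B' : Pt) (hB' : B' = pt (h * cos σ / sin σ) h)
    (E' : Pt) (hE' : E' = pt ((h / sin σ) * cos (3 * σ)) ((h / sin σ) * sin (3 * σ))) :
    B ≠ B' ∧ E ≠ E' ∧ perpBisector B B' = perpBisector E E' := by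
  have hr : h / sin σ * sin σ = h := div_mul_cancel₀ h hs
  have hB'_polar : B' = polarPt (h / sin σ) σ := by rw [hB', polarPt, hr, div_mul_eq_mul_div]
  have hE'_polar : E' = polarPt (h / sin σ) (3 * σ) := hE'
  have hB_zero : B = 0 := by rw [hB]; ext i; fin_cases i <;> rfl
  have hparallel : E' - E = (2 * cos (2 * σ) - 1) • (B' - B) := by
    rw [hB_zero, sub_zero, hE'_polar, hE, hB'_polar, ← polarPt_three_mul_sub, hr]
  have hlegs : dist B E = dist B' E' := by
    rw [hB, hE, hB'_polar, hE'_polar, ← dist_pt_zero_eq_dist_polarPt, hr]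
  have hfactor : 2 * cos (2 * σ) - 1 ≠ 0 := sub_ne_zero.mpr hσ
  have hBB' : B ≠ B' := fun hBB' ↦ hh <| by
    simpa [hB, hB', pt] using (congrArg (fun P : Pt ↦ P 1) hBB').symm
  refine ⟨hBB', ?_, ?_⟩
  · rw [ne_comm, ← sub_ne_zero, hparallel]
    exact smul_ne_zero hfactor (sub_ne_zero.mpr hBB'.symm)
  · rw [perpBisector_eq_coe, perpBisector_eq_coe, affinePerpBisector_eq_of_vsub_eq_smul_of_dist_eq
      hfactor (two_mul_cos_two_mul_sub_one_ne_one hs) hparallel hlegs]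

/-- **The origami trisection fold.**  Let `h > 0` and `σ ∈ (0, π/6)`.  With `B = (0,0)`,
`E = (0,2h)`, `B' = (h·cos σ/sin σ, h)` (on the horizontal line `{p | p 1 = h}` and on
the ray from `B` of angle `σ`) and `E' = ((h/sin σ)·cos 3σ, (h/sin σ)·sin 3σ)` (on the
ray of angle `3σ`), we have `B ≠ B'`, `E ≠ E'`, and the crease folding `B` onto `B'`
coincides with the crease folding `E` onto `E'`: a single fold trisects `α = 3σ`. -/
theorem origami_trisection_fold (h σ : ℝ) (hh : 0 < h) (hσ : σ ∈ Set.Ioo 0 (π/6))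
    (B : Pt) (hB : B = pt 0 0) (E : Pt) (hE : E = pt 0 (2*h))
    (B' : Pt) (hB' : B' = pt (h * Real.cos σ / Real.sin σ) h)
    (E' : Pt) (hE' : E' = pt ((h / Real.sin σ) * Real.cos (3*σ)) ((h / Real.sin σ) * Real.sin (3*σ))) :
    B ≠ B' ∧ E ≠ E' ∧ perpBisector B B' = perpBisector E E' := by
  have hs : 0 < sin σ := sin_pos_of_pos_of_lt_pi hσ.1 (by linarith [hσ.2, pi_pos])
  have hc : 1 < 2 * cos (2 * σ) :=
    one_lt_two_mul_cos_two_mul_of_abs_lt (abs_lt.mpr ⟨by linarith [hσ.1, pi_pos], hσ.2⟩)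
  exact origami_trisection_fold_general h σ hh.ne' hs.ne' hc.ne' B hB E hE B' hB' E' hE'
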